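/- arXiv:1502.06216 — 3 statements merged into one kernel-verified Lean document; each statement's English description precedes it below -/
import Mathlib

section
/- Let N ≥ 1, let π ∈ ℝ^{N×N} have strictly positive entries, and let p ∈ ℝ^N have strictly positive entries. Then the unique minimizer of π̃ ↦ KL(π̃|π) over the set {π̃ ∈ ℝ_+^{N×N} : π̃𝟙 = p} is given by the row rescaling π̃_{ij} = p_i · π_{ij} / (Σ_k π_{ik}); in matrix form it equals diag(p ⊘ (π𝟙)) · π. -/
open scoped BigOperators

noncomputable section

def KLmat {N : ℕ} (π ξ : Fin N → Fin N → ℝ) : ℝ :=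
  ∑ i, ∑ j, (π i j * Real.log (π i j / ξ i j) - π i j + ξ i j)

/-- `x` is the unique minimizer of `F` over `S`. -/
def IsUniqMinOn {α β : Type*} [Preorder β] (F : α → β) (S : Set α) (x : α) : Prop :=
  x ∈ S ∧ (∀ y ∈ S, F x ≤ F y) ∧ ∀ y ∈ S, (∀ z ∈ S, F y ≤ F z) → y = x

/-!
Objective and constraints both separate over the rows, so it suffices to project a single positive
vector `x` onto the nonnegative vectors of mass `m`. Rescaling the reference vector changes
`KL(y | x)` by a quantity that depends on `y` only through its mass, whence the Pythagorean identity
`KL(y | x) = KL(y | c x) + KL(c x | x)` for all `y` with the mass of `c x`. The first term on the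
right is positive unless `y = c x`.
-/

open InformationTheory (klFun klFun_apply klFun_nonneg klFun_eq_zero_iff)

theorem isUniqMinOn_iff_forall_lt {α β : Type*} [Preorder β] {F : α → β} {S : Set α} {x : α} :
    IsUniqMinOn F S x ↔ x ∈ S ∧ ∀ y ∈ S, y ≠ x → F x < F y := by
  constructor
  · rintro ⟨hx, hmin, huniq⟩
    exact ⟨hx, fun y hy hne => lt_of_le_not_ge (hmin y hy) fun hle =>
      hne (huniq y hy fun z hz => hle.trans (hmin z hz))⟩
  · rintro ⟨hx, hlt⟩
    refine ⟨hx, fun y hy => ?_, fun y hy hmin => ?_⟩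
    · rcases eq_or_ne y x with rfl | hne
      · exact le_rfl
      · exact (hlt y hy hne).le
    · by_contra hne
      exact (hlt y hy hne).not_ge (hmin x hx)

theorem IsUniqMinOn.sum_pi {ι β : Type*} {α : ι → Type*} [Fintype ι] [AddCommMonoid β]
    [PartialOrder β] [IsOrderedCancelAddMonoid β] {F : ∀ i, α i → β} {S : ∀ i, Set (α i)}
    {x : ∀ i, α i} (h : ∀ i, IsUniqMinOn (F i) (S i) (x i)) :
    IsUniqMinOn (fun y => ∑ i, F i (y i)) (Set.univ.pi S) x := by
  refine isUniqMinOn_iff_forall_lt.mpr ⟨fun i _ => (h i).1, fun y hy hne => ?_⟩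
  obtain ⟨i, hi⟩ := Function.ne_iff.mp hne
  exact Finset.sum_lt_sum (fun j _ => (h j).2.1 (y j) (hy j trivial))
    ⟨i, Finset.mem_univ i, (isUniqMinOn_iff_forall_lt.mp (h i)).2 (y i) (hy i trivial) hi⟩

theorem mul_klFun_div {a b : ℝ} (hb : b ≠ 0) :
    b * klFun (a / b) = a * Real.log (a / b) - a + b := by
  rw [klFun_apply]
  field_simp
  ring

section KLSum

variable {ι : Type*} [Fintype ι] {x y : ι → ℝ} {c m : ℝ}

/-- The generalized Kullback-Leibler divergence `KL(y | x)` of vectors on a finite index set, not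
assumed to have the same mass. Being real-valued, it is the divergence only if `y j = 0` whenever
`x j = 0`; otherwise the divergence is infinite and this is a junk value. -/
def klSum (y x : ι → ℝ) : ℝ :=
  ∑ j, (y j * Real.log (y j / x j) - y j + x j)

theorem klSum_self (x : ι → ℝ) : klSum x x = 0 :=
  Finset.sum_eq_zero fun j _ => by
    rcases eq_or_ne (x j) 0 with hj | hj <;> simp [hj]

theorem klSum_eq_sum_mul_klFun (y : ι → ℝ) (hx : ∀ j, x j ≠ 0) :
    klSum y x = ∑ j, x j * klFun (y j / x j) :=
  Finset.sum_congr rfl fun j _ => (mul_klFun_div (hx j)).symm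

theorem klSum_pos_of_ne (hy : ∀ j, 0 ≤ y j) (hx : ∀ j, 0 < x j) (hne : y ≠ x) :
    0 < klSum y x := by
  have ratio_nonneg (j : ι) : 0 ≤ y j / x j := div_nonneg (hy j) (hx j).le
  have term_nonneg (j : ι) : 0 ≤ x j * klFun (y j / x j) :=
    mul_nonneg (hx j).le (klFun_nonneg (ratio_nonneg j))
  obtain ⟨j, hj⟩ := Function.ne_iff.mp hne
  have klFun_ne_zero : klFun (y j / x j) ≠ 0 := by
    rwa [Ne, klFun_eq_zero_iff (ratio_nonneg j), div_eq_one_iff_eq (hx j).ne']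
  rw [klSum_eq_sum_mul_klFun y fun j => (hx j).ne']
  exact Finset.sum_pos' (fun j _ => term_nonneg j)
    ⟨j, Finset.mem_univ j, (term_nonneg j).lt_of_ne' (mul_ne_zero (hx j).ne' klFun_ne_zero)⟩

theorem klSum_eq_klSum_smul_add (y : ι → ℝ) (hx : ∀ j, x j ≠ 0) (hc : c ≠ 0) :
    klSum y x = klSum y (c • x) + ((∑ j, y j) * Real.log c + (1 - c) * ∑ j, x j) := by
  simp only [klSum, Finset.sum_mul, Finset.mul_sum, ← Finset.sum_add_distrib, Pi.smul_apply,
    smul_eq_mul]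
  refine Finset.sum_congr rfl fun j _ => ?_
  rcases eq_or_ne (y j) 0 with hj | hj
  · rw [hj]
    ring
  · rw [Real.log_div hj (hx j), Real.log_div hj (mul_ne_zero hc (hx j)), Real.log_mul hc (hx j)]
    ring

theorem klSum_eq_klSum_smul_add_klSum_smul (hx : ∀ j, x j ≠ 0) (hc : c ≠ 0)
    (hmass : ∑ j, y j = ∑ j, (c • x) j) :
    klSum y x = klSum y (c • x) + klSum (c • x) x := by
  rw [klSum_eq_klSum_smul_add y hx hc, klSum_eq_klSum_smul_add (c • x) hx hc, klSum_self, zero_add,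
    hmass]

theorem isUniqMinOn_klSum_of_sum_eq [Nonempty ι] (hx : ∀ j, 0 < x j) (hm : 0 ≤ m) :
    IsUniqMinOn (fun y => klSum y x) {y : ι → ℝ | (∀ j, 0 ≤ y j) ∧ ∑ j, y j = m}
      (fun j => m * x j / ∑ k, x k) := by
  have mass_pos : 0 < ∑ k, x k := Finset.sum_pos (fun k _ => hx k) Finset.univ_nonempty
  have rescale_eq : (fun j => m * x j / ∑ k, x k) = (m / ∑ k, x k) • x :=
    funext fun j => mul_div_right_comm _ _ _
  have rescale_mass : ∑ j, ((m / ∑ k, x k) • x) j = m := by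
    simp only [Pi.smul_apply, smul_eq_mul, ← Finset.mul_sum, div_mul_cancel₀ m mass_pos.ne']
  rw [rescale_eq]
  refine isUniqMinOn_iff_forall_lt.mpr
    ⟨⟨fun j => mul_nonneg (div_nonneg hm mass_pos.le) (hx j).le, rescale_mass⟩, ?_⟩
  rintro y ⟨hy, y_mass⟩ hne
  rcases hm.eq_or_lt with rfl | hm
  · have y_eq_zero : y = 0 := (Fintype.sum_eq_zero_iff_of_nonneg hy).mp y_mass
    simp [y_eq_zero] at hne
  · have scale_pos : 0 < m / ∑ k, x k := div_pos hm mass_pos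
    have gap_pos : 0 < klSum y ((m / ∑ k, x k) • x) :=
      klSum_pos_of_ne hy (fun j => mul_pos scale_pos (hx j)) hne
    have pythagorean := klSum_eq_klSum_smul_add_klSum_smul (fun j => (hx j).ne') scale_pos.ne'
      (y_mass.trans rescale_mass.symm)
    linarith

end KLSum

theorem KL_proj_row_marginal_general {ι κ : Type*} [Fintype ι] [Fintype κ] [Nonempty κ]
    (π : ι → κ → ℝ) (hπ : ∀ i j, 0 < π i j) (p : ι → ℝ) (hp : ∀ i, 0 ≤ p i) :
    IsUniqMinOn (fun σ => ∑ i, klSum (σ i) (π i))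
      {σ : ι → κ → ℝ | (∀ i j, 0 ≤ σ i j) ∧ ∀ i, ∑ j, σ i j = p i}
      (fun i j => p i * π i j / ∑ k, π i k) := by
  have feasible_eq_pi : {σ : ι → κ → ℝ | (∀ i j, 0 ≤ σ i j) ∧ ∀ i, ∑ j, σ i j = p i} =
      Set.univ.pi fun i => {y : κ → ℝ | (∀ j, 0 ≤ y j) ∧ ∑ j, y j = p i} := by
    ext σ
    simp [Set.mem_pi, forall_and]
  rw [feasible_eq_pi]
  exact IsUniqMinOn.sum_pi fun i => isUniqMinOn_klSum_of_sum_eq (hπ i) (hp i)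

/-- The KL projection onto the row-marginal constraint set
`{π̃ ≥ 0 : π̃𝟙 = p}` is the row rescaling `π̃_{ij} = p_i π_{ij} / Σ_k π_{ik}`. -/
theorem KL_proj_row_marginal {N : ℕ} (hN : 1 ≤ N)
    (π : Fin N → Fin N → ℝ) (hπ : ∀ i j, 0 < π i j)
    (p : Fin N → ℝ) (hp : ∀ i, 0 < p i) :
    IsUniqMinOn (fun σ => KLmat σ π)
      {σ : Fin N → Fin N → ℝ | (∀ i j, 0 ≤ σ i j) ∧ ∀ i, ∑ j, σ i j = p i}
      (fun i j => p i * π i j / ∑ k, π i k) := by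
  have : Nonempty (Fin N) := Fin.pos_iff_nonempty.mp hN
  exact KL_proj_row_marginal_general π hπ p fun i => (hp i).le
end
end

section
/- (Composition-with-sum rule for KL proximal operators.) Let M, N ≥ 1, let h : ℝ^N → ℝ ∪ {+∞} be proper, lower semicontinuous and convex, set λ = (1, …, 1) ∈ ℝ^M, and define f(p_1, …, p_M) = h(p_1 + ⋯ + p_M). Then for all strictly positive p_1, …, p_M ∈ ℝ^N, writing s = p_1 + ⋯ + p_M and r = Prox^{KL}_h(s) (assumed to exist uniquely), one has Prox^{KL_λ}_f(p_1, …, p_M) = ( (r ⊘ s) ⊙ p_1, …, (r ⊘ s) ⊙ p_M ). -/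
open scoped BigOperators

noncomputable section

def ProperLSCConvex {E : Type*} [AddCommGroup E] [Module ℝ E] [TopologicalSpace E]
    (f : E → EReal) : Prop :=
  (∀ x, f x ≠ ⊥) ∧ (∃ x, f x ≠ ⊤) ∧ LowerSemicontinuous f ∧
    ∀ x y : E, ∀ a b : ℝ, 0 ≤ a → 0 ≤ b → a + b = 1 →
      f (a • x + b • y) ≤ (a : EReal) * f x + (b : EReal) * f y

def KLvec {N : ℕ} (p q : Fin N → ℝ) : ℝ :=
  ∑ i, (p i * Real.log (p i / q i) - p i + q i)

def KLlam {M N : ℕ} (lam : Fin M → ℝ) (P Q : Fin M → Fin N → ℝ) : ℝ :=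
  ∑ m, lam m * KLvec (P m) (Q m)

/-!
Write `s` and `q` for the column sums of `P` and `Q`. The proof rests on the Pythagorean identity
`KL(Q | P) = KL(q | s) + KL(Q | (q ⊘ s) ⊙ P)`: its last term is nonnegative and vanishes exactly
when `Q = (q ⊘ s) ⊙ P`. Hence, among the `Q` with prescribed column sums `q`, the objective
`KL(Q | P) + h(q)` is smallest exactly at `(q ⊘ s) ⊙ P`, where it equals `KL(q | s) + h(q)`, and
what is left is the minimization over `q` that defines `r`.
-/

namespace IsUniqMinOn

variable {α β γ : Type*}

theorem of_comp_le [Preorder γ] {F : α → γ} {G : β → γ} {S : Set α} {T : Set β} {π : α → β}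
    {x : α} {y : β} (hy : IsUniqMinOn G T y) (hπ : Set.MapsTo π S T) (hx : x ∈ S)
    (hle : ∀ z ∈ S, G (π z) ≤ F z) (hxy : F x ≤ G y)
    (huniq : ∀ z ∈ S, π z = y → F z ≤ G y → z = x) : IsUniqMinOn F S x := by
  obtain ⟨-, hymin, hyuniq⟩ := hy
  refine ⟨hx, fun z hz => hxy.trans ((hymin _ (hπ hz)).trans (hle z hz)), fun z hz hzmin => ?_⟩
  have hzy : F z ≤ G y := (hzmin x hx).trans hxy
  exact huniq z hz
    (hyuniq _ (hπ hz) fun w hw => (hle z hz).trans (hzy.trans (hymin w hw))) hzy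

theorem ne_top [Preorder γ] [OrderTop γ] {F : α → γ} {S : Set α} {x : α}
    (hx : IsUniqMinOn F S x) (hS : S.Nontrivial) : F x ≠ ⊤ := by
  intro htop
  obtain ⟨y, hyS, hyx⟩ := hS.exists_ne x
  refine hyx (hx.2.2 y hyS fun z hz => ?_)
  exact le_top.trans (htop.ge.trans (hx.2.1 z hz))

end IsUniqMinOn

/-- The scalar generalized Kullback–Leibler divergence, the summand of `KLvec`. At `b = 0` division
by zero makes it `-a` rather than `+∞`. -/
def klTerm (a b : ℝ) : ℝ :=
  a * Real.log (a / b) - a + b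

section klTerm

variable {a b : ℝ}

theorem klTerm_eq_mul_klFun (hb : b ≠ 0) :
    klTerm a b = b * InformationTheory.klFun (a / b) := by
  unfold klTerm InformationTheory.klFun
  field_simp
  ring

theorem klTerm_nonneg (ha : 0 ≤ a) (hb : 0 ≤ b) (hab : b = 0 → a = 0) : 0 ≤ klTerm a b := by
  rcases eq_or_ne b 0 with rfl | hb0
  · simp [klTerm, hab rfl]
  · rw [klTerm_eq_mul_klFun hb0]
    exact mul_nonneg hb (InformationTheory.klFun_nonneg (div_nonneg ha hb))

theorem klTerm_eq_zero_iff (ha : 0 ≤ a) (hb : 0 ≤ b) (hab : b = 0 → a = 0) :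
    klTerm a b = 0 ↔ a = b := by
  rcases eq_or_ne b 0 with rfl | hb0
  · simp [klTerm, hab rfl]
  · rw [klTerm_eq_mul_klFun hb0, mul_eq_zero_iff_left hb0,
      InformationTheory.klFun_eq_zero_iff (div_nonneg ha hb), div_eq_one_iff_eq hb0]

theorem klTerm_eq_add_klTerm_mul {c : ℝ} (hb : b ≠ 0) (hc : c = 0 → a = 0) :
    klTerm a b = klTerm a (c * b) + a * Real.log c + b - c * b := by
  unfold klTerm
  rcases eq_or_ne a 0 with rfl | ha
  · ring
  · have hc0 : c ≠ 0 := mt hc ha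
    rw [Real.log_div ha hb, Real.log_div ha (mul_ne_zero hc0 hb), Real.log_mul hc0 hb]
    ring

theorem sum_klTerm_eq_klTerm_sum_add {ι : Type*} {s : Finset ι} {q p : ι → ℝ}
    (hq : ∀ m ∈ s, 0 ≤ q m) (hp : ∀ m ∈ s, 0 < p m) :
    ∑ m ∈ s, klTerm (q m) (p m) = klTerm (∑ m ∈ s, q m) (∑ m ∈ s, p m) +
      ∑ m ∈ s, klTerm (q m) ((∑ k ∈ s, q k) / (∑ k ∈ s, p k) * p m) := by
  rcases s.eq_empty_or_nonempty with rfl | hs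
  · simp [klTerm]
  have hsum : ∑ k ∈ s, p k ≠ 0 := (Finset.sum_pos hp hs).ne'
  set c := (∑ k ∈ s, q k) / ∑ k ∈ s, p k with hc
  have hzero : ∀ m ∈ s, c = 0 → q m = 0 := fun m hm h0 =>
    (Finset.sum_eq_zero_iff_of_nonneg hq).1 ((div_eq_zero_iff.1 h0).resolve_right hsum) m hm
  calc ∑ m ∈ s, klTerm (q m) (p m)
      = ∑ m ∈ s, (klTerm (q m) (c * p m) + q m * Real.log c + p m - c * p m) :=
        Finset.sum_congr rfl fun m hm => klTerm_eq_add_klTerm_mul (hp m hm).ne' (hzero m hm)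
    _ = ∑ m ∈ s, klTerm (q m) (c * p m) + (∑ m ∈ s, q m) * Real.log c + ∑ m ∈ s, p m
          - c * ∑ m ∈ s, p m := by
        simp only [Finset.sum_sub_distrib, Finset.sum_add_distrib, Finset.sum_mul, Finset.mul_sum]
    _ = klTerm (∑ m ∈ s, q m) (∑ m ∈ s, p m) + ∑ m ∈ s, klTerm (q m) (c * p m) := by
        rw [klTerm, hc, div_mul_cancel₀ _ hsum]
        ring

end klTerm

section KLvec

variable {N : ℕ} {p q : Fin N → ℝ}

theorem KLvec_nonneg (hp : ∀ i, 0 ≤ p i) (hq : ∀ i, 0 ≤ q i) (hpq : ∀ i, q i = 0 → p i = 0) :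
    0 ≤ KLvec p q :=
  Finset.sum_nonneg fun i _ => klTerm_nonneg (hp i) (hq i) (hpq i)

theorem KLvec_eq_zero_iff (hp : ∀ i, 0 ≤ p i) (hq : ∀ i, 0 ≤ q i)
    (hpq : ∀ i, q i = 0 → p i = 0) : KLvec p q = 0 ↔ p = q := by
  change ∑ i, klTerm (p i) (q i) = 0 ↔ p = q
  rw [Finset.sum_eq_zero_iff_of_nonneg fun i _ => klTerm_nonneg (hp i) (hq i) (hpq i),
    funext_iff]
  simp only [Finset.mem_univ, true_imp_iff, klTerm_eq_zero_iff (hp _) (hq _) (hpq _)]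

end KLvec

section KLlam

variable {M N : ℕ} {lam : Fin M → ℝ} {P Q : Fin M → Fin N → ℝ}

theorem KLlam_nonneg (hlam : ∀ m, 0 ≤ lam m) (hP : ∀ m i, 0 ≤ P m i) (hQ : ∀ m i, 0 ≤ Q m i)
    (hPQ : ∀ m i, Q m i = 0 → P m i = 0) : 0 ≤ KLlam lam P Q :=
  Finset.sum_nonneg fun m _ => mul_nonneg (hlam m) (KLvec_nonneg (hP m) (hQ m) (hPQ m))

theorem KLlam_eq_zero_iff (hlam : ∀ m, 0 < lam m) (hP : ∀ m i, 0 ≤ P m i)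
    (hQ : ∀ m i, 0 ≤ Q m i) (hPQ : ∀ m i, Q m i = 0 → P m i = 0) :
    KLlam lam P Q = 0 ↔ P = Q := by
  rw [KLlam, Finset.sum_eq_zero_iff_of_nonneg fun m _ =>
    mul_nonneg (hlam m).le (KLvec_nonneg (hP m) (hQ m) (hPQ m)), funext_iff]
  simp only [Finset.mem_univ, true_imp_iff, mul_eq_zero_iff_left (hlam _).ne',
    KLvec_eq_zero_iff (hP _) (hQ _) (hPQ _)]

end KLlam

/-- The sum `p₁ + ⋯ + p_M` of a tuple of vectors, written entrywise. -/
def tupleSum {M N : ℕ} (P : Fin M → Fin N → ℝ) : Fin N → ℝ :=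
  fun i => ∑ m, P m i

/-- The tuple `((q ⊘ s) ⊙ p₁, …, (q ⊘ s) ⊙ p_M)` with `s = p₁ + ⋯ + p_M`, which distributes `q`
over the `M` components in proportion to `P`. -/
def proportionalSplit {M N : ℕ} (P : Fin M → Fin N → ℝ) (q : Fin N → ℝ) : Fin M → Fin N → ℝ :=
  fun m i => q i / tupleSum P i * P m i

section proportionalSplit

variable {M N : ℕ} {P Q : Fin M → Fin N → ℝ} {q : Fin N → ℝ}

theorem tupleSum_nonneg (hQ : ∀ m i, 0 ≤ Q m i) (i : Fin N) : 0 ≤ tupleSum Q i :=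
  Finset.sum_nonneg fun m _ => hQ m i

theorem proportionalSplit_nonneg (hP : ∀ m i, 0 ≤ P m i) (hq : ∀ i, 0 ≤ q i) (m : Fin M)
    (i : Fin N) : 0 ≤ proportionalSplit P q m i :=
  mul_nonneg (div_nonneg (hq i) (tupleSum_nonneg hP i)) (hP m i)

theorem tupleSum_proportionalSplit (hP : ∀ i, tupleSum P i ≠ 0) :
    tupleSum (proportionalSplit P q) = q := by
  funext i
  calc ∑ m, q i / tupleSum P i * P m i
      = q i / tupleSum P i * tupleSum P i := (Finset.mul_sum _ _ _).symm
    _ = q i := div_mul_cancel₀ _ (hP i)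

theorem eq_zero_of_proportionalSplit_tupleSum_eq_zero (hP : ∀ m i, 0 < P m i)
    (hQ : ∀ m i, 0 ≤ Q m i) {m : Fin M} {i : Fin N}
    (h0 : proportionalSplit P (tupleSum Q) m i = 0) : Q m i = 0 := by
  have hPsum : tupleSum P i ≠ 0 :=
    (Finset.sum_pos (fun k _ => hP k i) ⟨m, Finset.mem_univ m⟩).ne'
  have hQsum : tupleSum Q i = 0 :=
    (div_eq_zero_iff.1 ((mul_eq_zero.1 h0).resolve_right (hP m i).ne')).resolve_right hPsum
  exact (Finset.sum_eq_zero_iff_of_nonneg fun k _ => hQ k i).1 hQsum m (Finset.mem_univ m)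

theorem KLlam_one_eq_KLvec_tupleSum_add (hP : ∀ m i, 0 < P m i) (hQ : ∀ m i, 0 ≤ Q m i) :
    KLlam (fun _ => 1) Q P = KLvec (tupleSum Q) (tupleSum P) +
      KLlam (fun _ => 1) Q (proportionalSplit P (tupleSum Q)) := by
  have KLlam_one (R : Fin M → Fin N → ℝ) :
      KLlam (fun _ => 1) Q R = ∑ i, ∑ m, klTerm (Q m i) (R m i) := by
    simp only [KLlam, one_mul]
    exact Finset.sum_comm
  rw [KLlam_one, KLlam_one, KLvec, ← Finset.sum_add_distrib]
  exact Finset.sum_congr rfl fun i _ =>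
    sum_klTerm_eq_klTerm_sum_add (fun m _ => hQ m i) fun m _ => hP m i

theorem KLvec_tupleSum_le_KLlam_one (hP : ∀ m i, 0 < P m i) (hQ : ∀ m i, 0 ≤ Q m i) :
    KLvec (tupleSum Q) (tupleSum P) ≤ KLlam (fun _ => 1) Q P := by
  rw [KLlam_one_eq_KLvec_tupleSum_add hP hQ]
  exact le_add_of_nonneg_right <| KLlam_nonneg (fun _ => zero_le_one) hQ
    (proportionalSplit_nonneg (fun m i => (hP m i).le) (tupleSum_nonneg hQ))
    fun _ _ => eq_zero_of_proportionalSplit_tupleSum_eq_zero hP hQ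

theorem KLlam_one_eq_KLvec_tupleSum_iff (hP : ∀ m i, 0 < P m i) (hQ : ∀ m i, 0 ≤ Q m i) :
    KLlam (fun _ => 1) Q P = KLvec (tupleSum Q) (tupleSum P) ↔
      Q = proportionalSplit P (tupleSum Q) := by
  rw [KLlam_one_eq_KLvec_tupleSum_add hP hQ, add_eq_left]
  exact KLlam_eq_zero_iff (fun _ => one_pos) hQ
    (proportionalSplit_nonneg (fun m i => (hP m i).le) (tupleSum_nonneg hQ))
    fun _ _ => eq_zero_of_proportionalSplit_tupleSum_eq_zero hP hQ

theorem KLlam_one_proportionalSplit (hP : ∀ m i, 0 < P m i) (hPsum : ∀ i, tupleSum P i ≠ 0)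
    (hq : ∀ i, 0 ≤ q i) :
    KLlam (fun _ => 1) (proportionalSplit P q) P = KLvec q (tupleSum P) := by
  have hsum : tupleSum (proportionalSplit P q) = q := tupleSum_proportionalSplit hPsum
  have hsplit := (KLlam_one_eq_KLvec_tupleSum_iff hP
    (proportionalSplit_nonneg (fun m i => (hP m i).le) hq)).2 (by rw [hsum])
  rwa [hsum] at hsplit

end proportionalSplit

theorem nontrivial_setOf_forall_nonneg {ι : Type*} [Nonempty ι] :
    {x : ι → ℝ | ∀ i, 0 ≤ x i}.Nontrivial :=
  ⟨0, fun _ => le_rfl, 1, fun _ => zero_le_one, zero_ne_one⟩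

theorem KL_prox_sum_composition_general {M N : ℕ} (hM : 1 ≤ M) (h : (Fin N → ℝ) → EReal)
    (P : Fin M → Fin N → ℝ) (hP : ∀ m i, 0 < P m i) (r : Fin N → ℝ) (hbot : h r ≠ ⊥)
    (hr : IsUniqMinOn (fun x => (KLvec x (tupleSum P) : EReal) + h x) {x | ∀ i, 0 ≤ x i} r) :
    IsUniqMinOn (fun Q => (KLlam (fun _ => 1) Q P : EReal) + h (tupleSum Q))
      {Q | ∀ m i, 0 ≤ Q m i} (proportionalSplit P r) := by
  have hPsum (i : Fin N) : tupleSum P i ≠ 0 :=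
    (Finset.sum_pos (fun m _ => hP m i) ⟨⟨0, hM⟩, Finset.mem_univ _⟩).ne'
  refine hr.of_comp_le (π := tupleSum) (fun Q hQ => tupleSum_nonneg hQ)
    (proportionalSplit_nonneg (fun m i => (hP m i).le) hr.1) (fun Q hQ => ?_) ?_ ?_
  · have hle := EReal.coe_le_coe_iff.2 (KLvec_tupleSum_le_KLlam_one hP hQ)
    gcongr
  · simp only [KLlam_one_proportionalSplit hP hPsum hr.1, tupleSum_proportionalSplit hPsum, le_rfl]
  · rintro Q hQ rfl hle
    rcases isEmpty_or_nonempty (Fin N) with _ | _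
    · exact Subsingleton.elim _ _
    have htop : h (tupleSum Q) ≠ ⊤ := fun htop =>
      hr.ne_top nontrivial_setOf_forall_nonneg (by simp only [htop, EReal.coe_add_top])
    lift h (tupleSum Q) to ℝ using ⟨htop, hbot⟩ with t
    norm_cast at hle
    exact (KLlam_one_eq_KLvec_tupleSum_iff hP hQ).1
      ((le_of_add_le_add_right hle).antisymm (KLvec_tupleSum_le_KLlam_one hP hQ))

/-- Composition-with-sum rule: for `f(p₁,…,p_M) = h(p₁ + ⋯ + p_M)` and unit weights,
`Prox^{KL_λ}_f(p₁,…,p_M) = ((r ⊘ s) ⊙ p₁, …, (r ⊘ s) ⊙ p_M)` where `s = p₁ + ⋯ + p_M`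
and `r = Prox^{KL}_h(s)` (assumed to exist uniquely). -/
theorem KL_prox_sum_composition {M N : ℕ} (hM : 1 ≤ M) (hN : 1 ≤ N)
    (h : (Fin N → ℝ) → EReal) (hh : ProperLSCConvex h)
    (P : Fin M → Fin N → ℝ) (hP : ∀ m i, 0 < P m i)
    (r : Fin N → ℝ)
    (hr : IsUniqMinOn
      (fun x => ((KLvec x (fun i => ∑ m, P m i) : ℝ) : EReal) + h x)
      {x : Fin N → ℝ | ∀ i, 0 ≤ x i} r) :
    IsUniqMinOn
      (fun Q => ((KLlam (fun _ => (1 : ℝ)) Q P : ℝ) : EReal) +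
        h (fun i => ∑ m, Q m i))
      {Q : Fin M → Fin N → ℝ | ∀ m i, 0 ≤ Q m i}
      (fun m i => r i / (∑ m', P m' i) * P m i) :=
  KL_prox_sum_composition_general hM h P hP r (hh.1 r) hr
end
end

section
/- Let N ≥ 1, τ > 0, let h : ℝ^N → ℝ ∪ {+∞} be proper, lower semicontinuous and convex, set λ = (1, τ), and define ψ_1(p_1, p_2) = ι_D(p_1, p_2) + h(p_1), where D = {(p_1,p_2) : p_1 = p_2}. Then for all strictly positive p_1, p_2 ∈ ℝ^N, Prox^{KL_λ}_{ψ_1}(p_1, p_2) = (p, p), where p = Prox^{KL}_{(1/(1+τ)) h}( p_1^{1/(1+τ)} ⊙ p_2^{τ/(1+τ)} ) (entrywise powers and product), whenever this last proximal problem has a unique minimizer. Moreover, for ψ_2(p_1,p_2) = ι_{\{(q,r)\}}(p_1,p_2) with fixed nonnegative q, r ∈ ℝ^N, one has Prox^{KL_λ}_{ψ_2}(p_1, p_2) = (q, r). -/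
open scoped BigOperators
open scoped Classical

noncomputable section

/-!
The Kullback–Leibler divergence satisfies the Bregman three-point identity
`KL(x|p) = KL(x|g) + KL(g|p) + ⟨x - g, log g - log p⟩`. Averaging it over `p = p₁, p₂` with weights
`w₁, w₂`, the linear terms cancel as soon as `g` is the weighted geometric mean of `p₁` and `p₂`.
Hence on the diagonal the objective is the image of `KL(·|g) + h / (w₁ + w₂)` under an increasing
affine map, so the two have the same minimizers; off the diagonal the objective is `⊤`.
-/

namespace IsUniqMinOn

theorem comp_strictMono {α β γ : Type*} [LinearOrder β] [Preorder γ] {F : α → β} {S : Set α}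
    {x : α} (hx : IsUniqMinOn F S x) {φ : β → γ} (hφ : StrictMono φ) :
    IsUniqMinOn (φ ∘ F) S x := by
  obtain ⟨hxS, hmin, huniq⟩ := hx
  exact ⟨hxS, fun y hy => hφ.monotone (hmin y hy),
    fun y hy hymin => huniq y hy fun z hz => hφ.le_iff_le.1 (hymin z hz)⟩

theorem of_eq_top {α β : Type*} [PartialOrder β] [OrderTop β] {F : α → β} {S : Set α} {x : α}
    (hxS : x ∈ S) (hx : F x ≠ ⊤) (htop : ∀ y ∈ S, y ≠ x → F y = ⊤) : IsUniqMinOn F S x := by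
  refine ⟨hxS, fun y hy => ?_, fun y hy hymin => ?_⟩
  · rcases eq_or_ne y x with rfl | hyx
    · exact le_rfl
    · exact le_top.trans_eq (htop y hy hyx).symm
  · by_contra hyx
    exact hx (top_le_iff.1 ((htop y hy hyx).symm.trans_le (hymin x hxS)))

theorem prod_self {α β : Type*} [PartialOrder β] [OrderTop β] {F : α → β} {G : α × α → β}
    {S : Set α} {x : α} (hx : IsUniqMinOn F S x) (hdiag : ∀ y ∈ S, G (y, y) = F y)
    (htop : ∀ y ∈ S, ∀ z ∈ S, y ≠ z → G (y, z) = ⊤) : IsUniqMinOn G (S ×ˢ S) (x, x) := by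
  obtain ⟨hxS, hmin, huniq⟩ := hx
  refine ⟨⟨hxS, hxS⟩, ?_, ?_⟩
  · rintro ⟨y, z⟩ ⟨hy, hz⟩
    rcases eq_or_ne y z with rfl | hyz
    · simpa only [hdiag x hxS, hdiag y hy] using hmin y hy
    · exact le_top.trans_eq (htop y hy z hz hyz).symm
  · rintro ⟨y, z⟩ ⟨hy, hz⟩ hyzmin
    rcases eq_or_ne y z with rfl | hyz
    · have hyx : y = x := huniq y hy fun u hu => by
        simpa only [hdiag y hy, hdiag u hu] using hyzmin (u, u) ⟨hu, hu⟩
      rw [hyx]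
    -- An off-diagonal minimizer forces `F = ⊤` on `S`, and then every point of `S` is a minimizer.
    · have F_eq_top : ∀ u ∈ S, F u = ⊤ := fun u hu => by
        simpa only [htop y hy z hz hyz, hdiag u hu, top_le_iff] using hyzmin (u, u) ⟨hu, hu⟩
      have eq_x : ∀ u ∈ S, u = x := fun u hu =>
        huniq u hu fun v hv => le_top.trans_eq (F_eq_top v hv).symm
      rw [eq_x y hy, eq_x z hz]

end IsUniqMinOn

theorem ereal_strictMono_coe_mul_add_coe {c : ℝ} (hc : 0 < c) (d : ℝ) :
    StrictMono fun u : EReal => (c : EReal) * u + d := by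
  intro u v huv
  have hmul : (c : EReal) * u < c * v := by
    simpa only [EReal.div_eq_inv_mul, ← EReal.coe_inv, inv_inv] using
      EReal.strictMono_div_right_of_pos (EReal.coe_pos.2 (inv_pos.2 hc)) (EReal.coe_ne_top _) huv
  exact EReal.add_lt_add_right_coe hmul d

theorem ereal_coe_mul_add_coe_add {c : ℝ} (hc : 0 < c) (k d : ℝ) (u : EReal) :
    ((c * k + d : ℝ) : EReal) + u = (c : EReal) * (k + ((1 / c : ℝ) : EReal) * u) + d := by
  rw [EReal.left_distrib_of_nonneg_of_ne_top (EReal.coe_nonneg.2 hc.le) (EReal.coe_ne_top c),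
    ← mul_assoc, ← EReal.coe_mul c (1 / c), mul_one_div_cancel hc.ne', EReal.coe_one, one_mul,
    EReal.coe_add, EReal.coe_mul, add_right_comm]

theorem KLvec_three_point {N : ℕ} (x : Fin N → ℝ) {g p : Fin N → ℝ} (hg : ∀ i, g i ≠ 0)
    (hp : ∀ i, p i ≠ 0) :
    KLvec x p = KLvec x g + KLvec g p +
      ∑ i, (x i - g i) * (Real.log (g i) - Real.log (p i)) := by
  simp only [KLvec, ← Finset.sum_add_distrib]
  refine Finset.sum_congr rfl fun i _ => ?_
  rw [Real.log_div (hg i) (hp i)]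
  rcases eq_or_ne (x i) 0 with hx | hx
  · rw [hx]
    ring
  · rw [Real.log_div hx (hp i), Real.log_div hx (hg i)]
    ring

/-- The entrywise weighted geometric mean `p^{w₁/(w₁+w₂)} ⊙ q^{w₂/(w₁+w₂)}`, the center at which the
weighted sum of two Kullback–Leibler divergences becomes a single one. The weights need not be
normalized; if `w₁ + w₂ = 0`, both exponents are `0`. -/
def weightedGeomMean {ι : Type*} (w₁ w₂ : ℝ) (p q : ι → ℝ) (i : ι) : ℝ :=
  p i ^ (w₁ / (w₁ + w₂)) * q i ^ (w₂ / (w₁ + w₂))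

section weightedGeomMean

variable {ι : Type*} {w₁ w₂ : ℝ} {p q : ι → ℝ}

theorem weightedGeomMean_pos (w₁ w₂ : ℝ) {i : ι} (hp : 0 < p i) (hq : 0 < q i) :
    0 < weightedGeomMean w₁ w₂ p q i :=
  mul_pos (Real.rpow_pos_of_pos hp _) (Real.rpow_pos_of_pos hq _)

theorem mul_log_weightedGeomMean (hw : w₁ + w₂ ≠ 0) {i : ι} (hp : 0 < p i) (hq : 0 < q i) :
    (w₁ + w₂) * Real.log (weightedGeomMean w₁ w₂ p q i) =
      w₁ * Real.log (p i) + w₂ * Real.log (q i) := by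
  rw [weightedGeomMean, Real.log_mul (Real.rpow_pos_of_pos hp _).ne'
    (Real.rpow_pos_of_pos hq _).ne', Real.log_rpow hp, Real.log_rpow hq]
  field_simp

end weightedGeomMean

section KLprox

variable {N : ℕ} {w₁ w₂ : ℝ} {p₁ p₂ : Fin N → ℝ}

theorem weighted_KLvec_eq_KLvec_weightedGeomMean_add (hw : w₁ + w₂ ≠ 0)
    (hp₁ : ∀ i, 0 < p₁ i) (hp₂ : ∀ i, 0 < p₂ i) (x : Fin N → ℝ) :
    w₁ * KLvec x p₁ + w₂ * KLvec x p₂ =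
      (w₁ + w₂) * KLvec x (weightedGeomMean w₁ w₂ p₁ p₂) +
        (w₁ * KLvec (weightedGeomMean w₁ w₂ p₁ p₂) p₁ +
          w₂ * KLvec (weightedGeomMean w₁ w₂ p₁ p₂) p₂) := by
  set g := weightedGeomMean w₁ w₂ p₁ p₂
  have hg : ∀ i, g i ≠ 0 := fun i => (weightedGeomMean_pos w₁ w₂ (hp₁ i) (hp₂ i)).ne'
  have linear_terms_cancel :
      w₁ * ∑ i, (x i - g i) * (Real.log (g i) - Real.log (p₁ i)) +
        w₂ * ∑ i, (x i - g i) * (Real.log (g i) - Real.log (p₂ i)) = 0 := by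
    rw [Finset.mul_sum, Finset.mul_sum, ← Finset.sum_add_distrib]
    refine Finset.sum_eq_zero fun i _ => ?_
    linear_combination (x i - g i) * mul_log_weightedGeomMean hw (hp₁ i) (hp₂ i)
  rw [KLvec_three_point x hg fun i => (hp₁ i).ne',
    KLvec_three_point x hg fun i => (hp₂ i).ne']
  linear_combination linear_terms_cancel

theorem KL_prox_wasserstein_attraction_general (hw : 0 < w₁ + w₂) {h : (Fin N → ℝ) → EReal}
    (hbot : ∀ x, h x ≠ ⊥) (hp₁ : ∀ i, 0 < p₁ i) (hp₂ : ∀ i, 0 < p₂ i) {p : Fin N → ℝ}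
    (hp : IsUniqMinOn
      (fun x => (KLvec x (weightedGeomMean w₁ w₂ p₁ p₂) : EReal) +
        ((1 / (w₁ + w₂) : ℝ) : EReal) * h x)
      {x : Fin N → ℝ | ∀ i, 0 ≤ x i} p)
    {q r : Fin N → ℝ} (hq : ∀ i, 0 ≤ q i) (hr : ∀ i, 0 ≤ r i) :
    IsUniqMinOn
      (fun Q : (Fin N → ℝ) × (Fin N → ℝ) =>
        ((w₁ * KLvec Q.1 p₁ + w₂ * KLvec Q.2 p₂ : ℝ) : EReal) +
          ((if Q.1 = Q.2 then (0 : EReal) else ⊤) + h Q.1))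
      {Q : (Fin N → ℝ) × (Fin N → ℝ) | (∀ i, 0 ≤ Q.1 i) ∧ ∀ i, 0 ≤ Q.2 i}
      (p, p) ∧
    IsUniqMinOn
      (fun Q : (Fin N → ℝ) × (Fin N → ℝ) =>
        ((w₁ * KLvec Q.1 p₁ + w₂ * KLvec Q.2 p₂ : ℝ) : EReal) +
          (if Q = (q, r) then (0 : EReal) else ⊤))
      {Q : (Fin N → ℝ) × (Fin N → ℝ) | (∀ i, 0 ≤ Q.1 i) ∧ ∀ i, 0 ≤ Q.2 i}
      (q, r) := by
  constructor
  · refine (hp.comp_strictMono (ereal_strictMono_coe_mul_add_coe hw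
      (w₁ * KLvec (weightedGeomMean w₁ w₂ p₁ p₂) p₁ +
        w₂ * KLvec (weightedGeomMean w₁ w₂ p₁ p₂) p₂))).prod_self
      (fun x _ => ?_) (fun x _ y _ hxy => ?_)
    · rw [if_pos rfl, zero_add, weighted_KLvec_eq_KLvec_weightedGeomMean_add hw.ne' hp₁ hp₂ x,
        ereal_coe_mul_add_coe_add hw, Function.comp_apply]
    · rw [if_neg hxy, EReal.top_add_of_ne_bot (hbot x), EReal.coe_add_top]
  · refine IsUniqMinOn.of_eq_top ⟨hq, hr⟩ ?_ (fun Q _ hQ => ?_)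
    · simpa only [if_true, add_zero] using EReal.coe_ne_top _
    · rw [if_neg hQ, EReal.coe_add_top]

end KLprox

/-- For `λ = (1,τ)` and `ψ₁(p₁,p₂) = ι_{p₁=p₂}(p₁,p₂) + h(p₁)`, one has
`Prox^{KL_λ}_{ψ₁}(p₁,p₂) = (p,p)` with
`p = Prox^{KL}_{(1/(1+τ))h}(p₁^{1/(1+τ)} ⊙ p₂^{τ/(1+τ)})`, whenever this last proximal
problem has a unique minimizer; moreover for `ψ₂ = ι_{{(q,r)}}`,
`Prox^{KL_λ}_{ψ₂}(p₁,p₂) = (q,r)`. -/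
theorem KL_prox_wasserstein_attraction {N : ℕ} (hN : 1 ≤ N)
    (τ : ℝ) (hτ : 0 < τ)
    (h : (Fin N → ℝ) → EReal) (hh : ProperLSCConvex h)
    (p₁ p₂ : Fin N → ℝ) (hp₁ : ∀ i, 0 < p₁ i) (hp₂ : ∀ i, 0 < p₂ i)
    (p : Fin N → ℝ)
    (hrhs : IsUniqMinOn
      (fun r => ((KLvec r
          (fun i => p₁ i ^ (1 / (1 + τ)) * p₂ i ^ (τ / (1 + τ))) : ℝ) : EReal) +
        ((1 / (1 + τ) : ℝ) : EReal) * h r)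
      {r : Fin N → ℝ | ∀ i, 0 ≤ r i} p)
    (q r : Fin N → ℝ) (hq : ∀ i, 0 ≤ q i) (hr : ∀ i, 0 ≤ r i) :
    IsUniqMinOn
      (fun Q : (Fin N → ℝ) × (Fin N → ℝ) =>
        ((KLvec Q.1 p₁ + τ * KLvec Q.2 p₂ : ℝ) : EReal) +
          ((if Q.1 = Q.2 then (0 : EReal) else ⊤) + h Q.1))
      {Q : (Fin N → ℝ) × (Fin N → ℝ) | (∀ i, 0 ≤ Q.1 i) ∧ ∀ i, 0 ≤ Q.2 i}
      (p, p) ∧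
    IsUniqMinOn
      (fun Q : (Fin N → ℝ) × (Fin N → ℝ) =>
        ((KLvec Q.1 p₁ + τ * KLvec Q.2 p₂ : ℝ) : EReal) +
          (if Q = (q, r) then (0 : EReal) else ⊤))
      {Q : (Fin N → ℝ) × (Fin N → ℝ) | (∀ i, 0 ≤ Q.1 i) ∧ ∀ i, 0 ≤ Q.2 i}
      (q, r) := by
  simpa only [one_mul] using KL_prox_wasserstein_attraction_general (w₁ := 1) (w₂ := τ)
    (by positivity) hh.1 hp₁ hp₂ hrhs hq hr
end
end
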